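/- arXiv:1409.2217 — 2 statements merged into one kernel-verified Lean document; each statement's English description precedes it below -/
import Mathlib

section
/- Let f : [-π,π]² → [0,∞) be integrable and even, i.e., f(-x,-y) = f(x,y) for all x,y ∈ [-π,π]. Then there exists a sequence (f_n) of nonnegative even trigonometric polynomials, that is, functions of the form f_n(x,y) = Σ_{j,k=-m}^m a_{j,k} e^{ι(jx+ky)} with real coefficients a_{j,k}, satisfying f_n ≥ 0 and f_n(-x,-y) = f_n(x,y), such that f_n → f in L¹([-π,π]²). -/
open MeasureTheory Real Filter

namespace UnitAddTorus

/-- A nonnegative continuous function on the torus is a uniform limit of nonnegative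
trigonometric polynomials. -/
theorem exists_mem_span_mFourier_re_nonneg {d : Type*} [Fintype d]
    (g : C(UnitAddTorus d, ℝ)) (hg : ∀ t, 0 ≤ g t) {δ : ℝ} (hδ : 0 < δ) :
    ∃ P ∈ Submodule.span ℂ (Set.range (mFourier (d := d))),
      (∀ t, 0 ≤ (P t).re) ∧ ∀ t, |(P t).re - g t| ≤ δ := by
  let Q : C(UnitAddTorus d, ℂ) := ⟨fun t => ((√(g t) : ℝ) : ℂ), by fun_prop⟩
  have hQ : Q ∈ closure (mFourierSubalgebra d : Set C(UnitAddTorus d, ℂ)) := by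
    rw [← StarSubalgebra.topologicalClosure_coe, mFourierSubalgebra_closure_eq_top]
    trivial
  have hcont : Continuous fun p : C(UnitAddTorus d, ℂ) => star p * p := by fun_prop
  have hmaps : Set.MapsTo (fun p : C(UnitAddTorus d, ℂ) => star p * p)
      (mFourierSubalgebra d : Set C(UnitAddTorus d, ℂ))
      {P | P ∈ Submodule.span ℂ (Set.range (mFourier (d := d))) ∧ ∀ t, 0 ≤ (P t).re} := by
    intro p hp
    refine ⟨?_, fun t => ?_⟩
    · rw [← mFourierSubalgebra_coe]
      exact (mFourierSubalgebra d).mul_mem ((mFourierSubalgebra d).star_mem' hp) hp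
    · simp [Complex.mul_re]
      nlinarith [mul_self_nonneg (p t).re, mul_self_nonneg (p t).im]
  obtain ⟨P, ⟨hP, hP0⟩, hPQ⟩ :=
    Metric.mem_closure_iff.1 (map_mem_closure hcont hQ hmaps) δ hδ
  refine ⟨P, hP, hP0, fun t => ?_⟩
  have h := ((ContinuousMap.dist_lt_iff hδ).1 hPQ t).le
  have hQt : (star Q * Q) t = (g t : ℂ) := by
    simp [Q, ← Complex.ofReal_mul, Real.mul_self_sqrt (hg t)]
  rw [hQt, dist_comm, Complex.dist_eq] at h
  simpa using (Complex.abs_re_le_norm _).trans h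

/-- Nonnegative trigonometric polynomials approximate nonnegative integrable functions in `L¹`,
for every finite measure on the torus. -/
theorem exists_mem_span_mFourier_integral_sub_le {d : Type*} [Fintype d]
    (ν : Measure (UnitAddTorus d)) [IsFiniteMeasure ν] {h : UnitAddTorus d → ℝ}
    (hh : Integrable h ν) (h0 : ∀ t, 0 ≤ h t) {ε : ℝ} (hε : 0 < ε) :
    ∃ P ∈ Submodule.span ℂ (Set.range (mFourier (d := d))),
      (∀ t, 0 ≤ (P t).re) ∧ ∫ t, |(P t).re - h t| ∂ν ≤ ε := by
  obtain ⟨g, hgε, hg⟩ := hh.exists_boundedContinuous_integral_sub_le (half_pos hε)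
  have hM : 0 < ν.real Set.univ + 1 := by positivity
  obtain ⟨P, hP, hP0, hPg⟩ := exists_mem_span_mFourier_re_nonneg
    (⟨fun t => max (g t) 0, by fun_prop⟩ : C(UnitAddTorus d, ℝ)) (fun t => le_max_right _ _)
    (δ := ε / 2 / (ν.real Set.univ + 1)) (by positivity)
  refine ⟨P, hP, hP0, ?_⟩
  have hint : Integrable (fun t => ε / 2 / (ν.real Set.univ + 1) + ‖h t - g t‖) ν :=
    (integrable_const _).add (hh.sub hg).norm
  calc ∫ t, |(P t).re - h t| ∂ν
      ≤ ∫ t, (ε / 2 / (ν.real Set.univ + 1) + ‖h t - g t‖) ∂ν := by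
        refine integral_mono_of_nonneg (ae_of_all _ fun t => abs_nonneg _) hint
          (ae_of_all _ fun t => ?_)
        have h1 := hPg t
        have h2 : |max (g t) 0 - h t| ≤ ‖h t - g t‖ := by
          have := abs_max_sub_max_le_abs (g t) (h t) 0
          rwa [max_eq_left (h0 t), abs_sub_comm (g t)] at this
        exact (abs_sub_le _ (max (g t) 0) _).trans (add_le_add h1 h2)
    _ = ν.real Set.univ * (ε / 2 / (ν.real Set.univ + 1)) + ∫ t, ‖h t - g t‖ ∂ν := by
        rw [integral_add (integrable_const _) (show Integrable (fun t => ‖h t - g t‖) ν from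
          (hh.sub hg).norm), integral_const, smul_eq_mul]
    _ ≤ ε / 2 + ε / 2 := by
        gcongr
        rw [mul_div_assoc', div_le_iff₀ hM]
        nlinarith
    _ = ε := add_halves ε

end UnitAddTorus

/-- The covering map `ℝ² → (ℝ / ℤ)²` with period `2π` in each coordinate. -/
noncomputable def planeToTorus (p : ℝ × ℝ) : UnitAddTorus (Fin 2) :=
  ![((p.1 / (2 * π) : ℝ) : UnitAddCircle), ((p.2 / (2 * π) : ℝ) : UnitAddCircle)]

theorem continuous_planeToTorus : Continuous planeToTorus := by
  refine continuous_pi fun i => ?_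
  fin_cases i
  · exact (AddCircle.continuous_mk' 1).comp (by fun_prop)
  · exact (AddCircle.continuous_mk' 1).comp (by fun_prop)

/-- A section of `planeToTorus` with values in `(-π, π]²`. -/
noncomputable def torusToPlane (t : UnitAddTorus (Fin 2)) : ℝ × ℝ :=
  (2 * π * AddCircle.measurableEquivIoc 1 (-(1 / 2)) (t 0),
    2 * π * AddCircle.measurableEquivIoc 1 (-(1 / 2)) (t 1))

theorem measurable_torusToPlane : Measurable torusToPlane := by
  unfold torusToPlane
  fun_prop

theorem torusToPlane_planeToTorus {p : ℝ × ℝ}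
    (hp : p ∈ Set.Ioc (-π) π ×ˢ Set.Ioc (-π) π) : torusToPlane (planeToTorus p) = p := by
  have key : ∀ x ∈ Set.Ioc (-π) π,
      2 * π * (AddCircle.measurableEquivIoc 1 (-(1 / 2)) ((x / (2 * π) : ℝ) : UnitAddCircle) : ℝ)
        = x := by
    intro x hx
    have hπ := Real.pi_pos
    have hx' : x / (2 * π) ∈ Set.Ioc (-(1 / 2) : ℝ) (-(1 / 2) + 1) := by
      constructor
      · rw [lt_div_iff₀ (by positivity)]; linarith [hx.1]
      · rw [div_le_iff₀ (by positivity)]; linarith [hx.2]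
    have : (AddCircle.measurableEquivIoc 1 (-(1 / 2)) ((x / (2 * π) : ℝ) : UnitAddCircle) : ℝ)
        = x / (2 * π) := AddCircle.equivIoc_coe_of_mem hx'
    rw [this]
    field_simp
  exact Prod.ext (key _ hp.1) (key _ hp.2)

theorem mFourier_planeToTorus (n : Fin 2 → ℤ) (p : ℝ × ℝ) :
    UnitAddTorus.mFourier n (planeToTorus p) =
      Complex.exp (Complex.I * ((n 0 : ℂ) * (p.1 : ℂ) + (n 1 : ℂ) * (p.2 : ℂ))) := by
  have hπ : (π : ℂ) ≠ 0 := by exact_mod_cast Real.pi_ne_zero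
  simp only [UnitAddTorus.mFourier, planeToTorus, ContinuousMap.coe_mk, Fin.prod_univ_two,
    Matrix.cons_val_zero, Matrix.cons_val_one, fourier_coe_apply, ← Complex.exp_add]
  congr 1
  push_cast
  field_simp

/-- A trigonometric polynomial on the torus, read on the plane as an explicit double sum. -/
theorem exists_sum_eq_of_mem_span_mFourier {P : C(UnitAddTorus (Fin 2), ℂ)}
    (hP : P ∈ Submodule.span ℂ (Set.range (UnitAddTorus.mFourier (d := Fin 2)))) :
    ∃ (m : ℕ) (c : ℤ → ℤ → ℂ), ∀ p : ℝ × ℝ, P (planeToTorus p) =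
      ∑ j ∈ Finset.Icc (-(m : ℤ)) (m : ℤ), ∑ k ∈ Finset.Icc (-(m : ℤ)) (m : ℤ),
        c j k * Complex.exp (Complex.I * ((j : ℂ) * (p.1 : ℂ) + (k : ℂ) * (p.2 : ℂ))) := by
  obtain ⟨c, rfl⟩ := Finsupp.mem_span_range_iff_exists_finsupp.1 hP
  let m : ℕ := c.support.sup fun v => max (v 0).natAbs (v 1).natAbs
  refine ⟨m, fun j k => c ![j, k], fun p => ?_⟩
  let e := (finTwoArrowEquiv ℤ).symm.toEmbedding
  have hsub : c.support ⊆
      ((Finset.Icc (-(m : ℤ)) m) ×ˢ (Finset.Icc (-(m : ℤ)) m)).map e := by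
    intro v hv
    have hm : max (v 0).natAbs (v 1).natAbs ≤ m :=
      Finset.le_sup (f := fun v : Fin 2 → ℤ => max (v 0).natAbs (v 1).natAbs) hv
    refine Finset.mem_map.2 ⟨(v 0, v 1), ?_, (finTwoArrowEquiv ℤ).symm_apply_apply v⟩
    simp only [Finset.mem_product, Finset.mem_Icc]
    omega
  rw [Finsupp.sum, ContinuousMap.sum_apply, Finset.sum_subset hsub, Finset.sum_map,
    Finset.sum_product]
  · simp [e, mFourier_planeToTorus]
  · intro v _ hv
    simp [Finsupp.notMem_support_iff.1 hv]

/-- The even part of the real part of a trigonometric polynomial is a trigonometric polynomial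
with real coefficients. -/
theorem exists_real_coeff_sum_eq_even_re {P : ℝ × ℝ → ℂ} {m : ℕ} {c : ℤ → ℤ → ℂ}
    (hP : ∀ p : ℝ × ℝ, P p =
      ∑ j ∈ Finset.Icc (-(m : ℤ)) (m : ℤ), ∑ k ∈ Finset.Icc (-(m : ℤ)) (m : ℤ),
        c j k * Complex.exp (Complex.I * ((j : ℂ) * (p.1 : ℂ) + (k : ℂ) * (p.2 : ℂ)))) :
    ∃ a : ℤ → ℤ → ℝ, ∀ x y : ℝ, ((((P (x, y)).re + (P (-x, -y)).re) / 2 : ℝ) : ℂ) =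
      ∑ j ∈ Finset.Icc (-(m : ℤ)) (m : ℤ), ∑ k ∈ Finset.Icc (-(m : ℤ)) (m : ℤ),
        (a j k : ℂ) * Complex.exp (Complex.I * ((j : ℂ) * (x : ℂ) + (k : ℂ) * (y : ℂ))) := by
  refine ⟨fun j k => ((c j k).re + (c (-j) (-k)).re) / 2, fun x y => ?_⟩
  let E : ℤ → ℤ → ℂ := fun j k =>
    Complex.exp (Complex.I * ((j : ℂ) * (x : ℂ) + (k : ℂ) * (y : ℂ)))
  have hE : ∀ j k : ℤ, E (-j) (-k) = (starRingEnd ℂ) (E j k) := by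
    intro j k
    simp only [E, ← Complex.exp_conj]
    congr 1
    simp
    ring
  have hneg : ∀ g : ℤ → ℂ, ∑ j ∈ Finset.Icc (-(m : ℤ)) m, g (-j) =
      ∑ j ∈ Finset.Icc (-(m : ℤ)) m, g j := by
    intro g
    refine Finset.sum_nbij' (fun j => -j) (fun j => -j) ?_ ?_ ?_ ?_ ?_ <;>
      simp <;> omega
  have hneg2 : ∑ j ∈ Finset.Icc (-(m : ℤ)) m, ∑ k ∈ Finset.Icc (-(m : ℤ)) m,
        ((c (-j) (-k)).re : ℂ) * E j k =
      ∑ j ∈ Finset.Icc (-(m : ℤ)) m, ∑ k ∈ Finset.Icc (-(m : ℤ)) m,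
        ((c j k).re : ℂ) * (starRingEnd ℂ) (E j k) := by
    rw [← hneg]
    refine Finset.sum_congr rfl fun j _ => ?_
    rw [← hneg]
    simp only [neg_neg, hE]
  have hre : ∀ z w : ℂ, ((((z * w).re + (z * (starRingEnd ℂ) w).re) / 2 : ℝ) : ℂ) =
      ((z.re : ℂ) * w + (z.re : ℂ) * (starRingEnd ℂ) w) / 2 := by
    intro z w
    apply Complex.ext <;> simp
  have hL : (((P (x, y)).re + (P (-x, -y)).re) / 2 : ℝ) =
      ∑ j ∈ Finset.Icc (-(m : ℤ)) m, ∑ k ∈ Finset.Icc (-(m : ℤ)) m,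
        ((c j k * E j k).re + (c j k * (starRingEnd ℂ) (E j k)).re) / 2 := by
    simp only [hP, Complex.re_sum, ← Finset.sum_div, Finset.sum_add_distrib, ← hE]
    simp [E]
  have hR : ∀ j k : ℤ, ((((c j k).re + (c (-j) (-k)).re) / 2 : ℝ) : ℂ) * E j k =
      (((c j k).re : ℂ) * E j k + ((c (-j) (-k)).re : ℂ) * E j k) / 2 := by
    intro j k
    push_cast
    ring
  change _ = ∑ j ∈ Finset.Icc (-(m : ℤ)) m, ∑ k ∈ Finset.Icc (-(m : ℤ)) m,
    ((((c j k).re + (c (-j) (-k)).re) / 2 : ℝ) : ℂ) * E j k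
  rw [hL]
  simp only [Complex.ofReal_sum, hre]
  simp only [hR, ← Finset.sum_div, Finset.sum_add_distrib, hneg2]

/-- Nonnegative trigonometric polynomials approximate nonnegative integrable functions on
`[-π, π]²` in `L¹`. -/
theorem exists_mem_span_mFourier_setIntegral_sub_le {f : ℝ × ℝ → ℝ}
    (hf0 : ∀ p ∈ Set.Icc (-π) π ×ˢ Set.Icc (-π) π, 0 ≤ f p)
    (hf : IntegrableOn f (Set.Icc (-π) π ×ˢ Set.Icc (-π) π)) {ε : ℝ} (hε : 0 < ε) :
    ∃ P ∈ Submodule.span ℂ (Set.range (UnitAddTorus.mFourier (d := Fin 2))),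
      (∀ t, 0 ≤ (P t).re) ∧
      ∫ p in Set.Icc (-π) π ×ˢ Set.Icc (-π) π, |(P (planeToTorus p)).re - f p| ≤ ε := by
  have hS : (Set.Ioc (-π) π ×ˢ Set.Ioc (-π) π : Set (ℝ × ℝ)) =ᵐ[volume]
      (Set.Icc (-π) π ×ˢ Set.Icc (-π) π : Set (ℝ × ℝ)) :=
    Measure.set_prod_ae_eq Ioc_ae_eq_Icc Ioc_ae_eq_Icc
  rw [← Measure.restrict_congr_set hS]
  rw [IntegrableOn, ← Measure.restrict_congr_set hS] at hf
  set μ := volume.restrict (Set.Ioc (-π) π ×ˢ Set.Ioc (-π) π : Set (ℝ × ℝ)) with hμ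
  have : IsFiniteMeasure μ := by
    refine ⟨?_⟩
    rw [hμ, Measure.restrict_apply_univ, Measure.volume_eq_prod, Measure.prod_prod]
    exact ENNReal.mul_lt_top measure_Ioc_lt_top measure_Ioc_lt_top
  have hmem : ∀ᵐ p ∂μ, p ∈ (Set.Ioc (-π) π ×ˢ Set.Ioc (-π) π : Set (ℝ × ℝ)) :=
    ae_restrict_mem (measurableSet_Ioc.prod measurableSet_Ioc)
  obtain ⟨g, hg, hfg⟩ := hf.aestronglyMeasurable
  have hcov := continuous_planeToTorus.measurable
  let h : UnitAddTorus (Fin 2) → ℝ := fun t => max (g (torusToPlane t)) 0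
  have hh : Measurable h := (hg.measurable.comp measurable_torusToPlane).max measurable_const
  have hhf : (fun p => h (planeToTorus p)) =ᵐ[μ] f := by
    filter_upwards [hmem, hfg] with p hp hpg
    have hp' : p ∈ (Set.Icc (-π) π ×ˢ Set.Icc (-π) π : Set (ℝ × ℝ)) :=
      ⟨Set.Ioc_subset_Icc_self hp.1, Set.Ioc_subset_Icc_self hp.2⟩
    simp only [h, torusToPlane_planeToTorus hp, ← hpg, max_eq_left (hf0 p hp')]
  have hhint : Integrable h (μ.map planeToTorus) :=
    (integrable_map_measure hh.aestronglyMeasurable hcov.aemeasurable).2 (hf.congr hhf.symm)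
  obtain ⟨P, hP, hP0, hPε⟩ := UnitAddTorus.exists_mem_span_mFourier_integral_sub_le
    (μ.map planeToTorus) hhint (fun t => le_max_right _ _) hε
  refine ⟨P, hP, hP0, ?_⟩
  have hmeas : Measurable fun t => |(P t).re - h t| := by
    have := P.continuous.measurable
    fun_prop
  rw [integral_map hcov.aemeasurable hmeas.aestronglyMeasurable] at hPε
  refine le_of_eq_of_le (integral_congr_ae ?_) hPε
  filter_upwards [hhf] with p hp
  rw [hp]

/-- Nonnegative even trigonometric polynomials with real coefficients approximate nonnegative even
integrable functions on `[-π, π]²` in `L¹`. -/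
theorem exists_trigPolynomial_setIntegral_sub_le (f : ℝ → ℝ → ℝ)
    (hf_nonneg : ∀ x ∈ Set.Icc (-π) π, ∀ y ∈ Set.Icc (-π) π, 0 ≤ f x y)
    (hf_even : ∀ x ∈ Set.Icc (-π) π, ∀ y ∈ Set.Icc (-π) π, f (-x) (-y) = f x y)
    (hf_int : IntegrableOn (fun p : ℝ × ℝ => f p.1 p.2)
      (Set.Icc (-π) π ×ˢ Set.Icc (-π) π)) {ε : ℝ} (hε : 0 < ε) :
    ∃ G : ℝ → ℝ → ℝ,
      (∃ (m : ℕ) (a : ℤ → ℤ → ℝ), ∀ x y : ℝ,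
        (G x y : ℂ) =
          ∑ j ∈ Finset.Icc (-(m : ℤ)) (m : ℤ), ∑ k ∈ Finset.Icc (-(m : ℤ)) (m : ℤ),
            (a j k : ℂ) *
              Complex.exp (Complex.I * ((j : ℂ) * (x : ℂ) + (k : ℂ) * (y : ℂ)))) ∧
      (∀ x y : ℝ, 0 ≤ G x y) ∧ (∀ x y : ℝ, G (-x) (-y) = G x y) ∧
      ∫ p in Set.Icc (-π) π ×ˢ Set.Icc (-π) π, |G p.1 p.2 - f p.1 p.2| ≤ ε := by
  obtain ⟨P, hP, hP0, hPε⟩ := exists_mem_span_mFourier_setIntegral_sub_le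
    (fun p hp => hf_nonneg p.1 hp.1 p.2 hp.2) hf_int hε
  obtain ⟨m, c, hc⟩ := exists_sum_eq_of_mem_span_mFourier hP
  obtain ⟨a, ha⟩ := exists_real_coeff_sum_eq_even_re (P := fun p => P (planeToTorus p)) hc
  refine ⟨fun x y => ((P (planeToTorus (x, y))).re + (P (planeToTorus (-x, -y))).re) / 2,
    ⟨m, a, ha⟩, fun x y => ?_, fun x y => ?_, ?_⟩
  · linarith [hP0 (planeToTorus (x, y)), hP0 (planeToTorus (-x, -y))]
  · simp only [neg_neg]
    ring
  set S : Set (ℝ × ℝ) := Set.Icc (-π) π ×ˢ Set.Icc (-π) π with hS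
  have hSm : MeasurableSet S := measurableSet_Icc.prod measurableSet_Icc
  have hSneg : Neg.neg ⁻¹' S = S := by
    ext p
    simp only [hS, Set.mem_preimage, Set.mem_prod, Set.mem_Icc, Prod.fst_neg, Prod.snd_neg]
    constructor <;> rintro ⟨⟨_, _⟩, _, _⟩ <;> refine ⟨⟨?_, ?_⟩, ?_, ?_⟩ <;> linarith
  let D : ℝ × ℝ → ℝ := fun p => |(P (planeToTorus p)).re - f p.1 p.2|
  have hmp : MeasurePreserving (Neg.neg : ℝ × ℝ → ℝ × ℝ) volume volume :=
    Measure.measurePreserving_neg _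
  have hemb : MeasurableEmbedding (Neg.neg : ℝ × ℝ → ℝ × ℝ) :=
    (MeasurableEquiv.neg (ℝ × ℝ)).measurableEmbedding
  have hD : IntegrableOn D S := by
    have hcont : Continuous fun p => (P (planeToTorus p)).re :=
      Complex.continuous_re.comp (P.continuous.comp continuous_planeToTorus)
    exact ((hcont.continuousOn.integrableOn_compact (isCompact_Icc.prod isCompact_Icc)).sub
      hf_int).abs
  have hDneg : IntegrableOn (fun p => D (-p)) S := by
    have := (hmp.integrableOn_comp_preimage hemb (f := D) (s := S)).2 hD
    rwa [hSneg] at this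
  have hDeq : ∫ p in S, D (-p) = ∫ p in S, D p := by
    have := hmp.setIntegral_preimage_emb hemb D S
    rwa [hSneg] at this
  calc ∫ p in S, |((P (planeToTorus (p.1, p.2))).re +
          (P (planeToTorus (-p.1, -p.2))).re) / 2 - f p.1 p.2|
      ≤ ∫ p in S, (D p + D (-p)) / 2 := by
        refine integral_mono_of_nonneg (ae_of_all _ fun p => abs_nonneg _)
          ((hD.add hDneg).div_const 2) ?_
        filter_upwards [ae_restrict_mem hSm] with p hp
        have he := hf_even p.1 hp.1 p.2 hp.2
        have h2 : D (-p) = |(P (planeToTorus (-p.1, -p.2))).re - f p.1 p.2| := by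
          rw [← he]
          rfl
        rw [h2]
        have := abs_add_le ((P (planeToTorus (p.1, p.2))).re - f p.1 p.2)
          ((P (planeToTorus (-p.1, -p.2))).re - f p.1 p.2)
        have h3 : ((P (planeToTorus (p.1, p.2))).re +
            (P (planeToTorus (-p.1, -p.2))).re) / 2 - f p.1 p.2 =
            (((P (planeToTorus (p.1, p.2))).re - f p.1 p.2) +
              ((P (planeToTorus (-p.1, -p.2))).re - f p.1 p.2)) / 2 := by ring
        rw [h3, abs_div, abs_two]
        exact div_le_div_of_nonneg_right this zero_le_two
    _ = ∫ p in S, D p := by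
        rw [integral_div, integral_add hD hDneg, hDeq]
        ring
    _ ≤ ε := hPε

/-- Every nonnegative, even, integrable function `f` on `[-π,π]²` is the
`L¹`-limit of a sequence of nonnegative even trigonometric polynomials. -/
theorem stmt_5 (f : ℝ → ℝ → ℝ)
    (hf_nonneg : ∀ x ∈ Set.Icc (-π) π, ∀ y ∈ Set.Icc (-π) π, 0 ≤ f x y)
    (hf_even : ∀ x ∈ Set.Icc (-π) π, ∀ y ∈ Set.Icc (-π) π, f (-x) (-y) = f x y)
    (hf_int : IntegrableOn (fun p : ℝ × ℝ => f p.1 p.2)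
      (Set.Icc (-π) π ×ˢ Set.Icc (-π) π)) :
    ∃ F : ℕ → ℝ → ℝ → ℝ,
      (∀ n : ℕ, ∃ (m : ℕ) (a : ℤ → ℤ → ℝ), ∀ x y : ℝ,
        (F n x y : ℂ) =
          ∑ j ∈ Finset.Icc (-(m : ℤ)) (m : ℤ), ∑ k ∈ Finset.Icc (-(m : ℤ)) (m : ℤ),
            (a j k : ℂ) * Complex.exp (Complex.I * ((j : ℂ) * (x : ℂ) + (k : ℂ) * (y : ℂ)))) ∧
      (∀ n : ℕ, ∀ x ∈ Set.Icc (-π) π, ∀ y ∈ Set.Icc (-π) π, 0 ≤ F n x y) ∧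
      (∀ n : ℕ, ∀ x ∈ Set.Icc (-π) π, ∀ y ∈ Set.Icc (-π) π, F n (-x) (-y) = F n x y) ∧
      Tendsto
        (fun n => ∫ p in Set.Icc (-π) π ×ˢ Set.Icc (-π) π, |F n p.1 p.2 - f p.1 p.2|)
        atTop (nhds 0) := by
  choose G hG using fun n : ℕ =>
    exists_trigPolynomial_setIntegral_sub_le f hf_nonneg hf_even hf_int
      (ε := 1 / ((n : ℝ) + 1)) (by positivity)
  refine ⟨G, fun n => (hG n).1, fun n x _ y _ => (hG n).2.1 x y,
    fun n x _ y _ => (hG n).2.2.1 x y, ?_⟩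
  exact squeeze_zero (fun n => integral_nonneg fun p => abs_nonneg _)
    (fun n => (hG n).2.2.2) tendsto_one_div_add_atTop_nhds_zero_nat
end

section
/- Let f : [-π,π]² → [0,∞) be integrable and even (f(-x,-y) = f(x,y)), and define C(u,v) = ∫_{-π}^π ∫_{-π}^π e^{ι(ux+vy)} f(x,y) dx dy for u,v ∈ ℤ. Then there exist a probability space and a family of real random variables (G_{i,j} : i,j ∈ ℤ) on it such that every finite real linear combination of the G_{i,j} is a centered Gaussian random variable, and E[G_{i,j} G_{i+u,j+v}] = C(u,v) for all i,j,u,v ∈ ℤ. -/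
open MeasureTheory Real

namespace ProbabilityTheory

open InnerProductSpace Finset in
/-- The normalized Gram-Schmidt vectors expand the original family, even if the latter is
linearly dependent. -/
lemma sum_inner_gramSchmidtNormed_smul {H : Type*} [NormedAddCommGroup H] [InnerProductSpace ℝ H]
    (φ : ℕ → H) {n N : ℕ} (hn : n < N) :
    ∑ k ∈ range N, inner ℝ (gramSchmidtNormed ℝ φ k) (φ n) • gramSchmidtNormed ℝ φ k = φ n := by
  set e := gramSchmidtNormed ℝ φ with he
  have e_orth : ∀ k j, k ≠ j → inner ℝ (e k) (e j) = 0 := fun k j hkj => by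
    simp [he, gramSchmidtNormed, inner_smul_left, inner_smul_right,
      gramSchmidt_orthogonal ℝ φ hkj]
  have mem : φ n ∈ Submodule.span ℝ (e '' Set.Iio N) := by
    rw [he, span_gramSchmidtNormed, span_gramSchmidt_Iio]
    exact Submodule.subset_span (Set.mem_image_of_mem _ hn)
  generalize φ n = x at mem ⊢
  induction mem using Submodule.span_induction with
  | mem x hx =>
    obtain ⟨j, hj, rfl⟩ := hx
    rw [sum_eq_single_of_mem j (by simpa using hj)
      fun k _ hkj => by rw [e_orth k j hkj, zero_smul]]
    by_cases h : e j = 0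
    · simp [h]
    · simp [gramSchmidtNormed_unit_length' h, he]
  | zero => simp
  | add x y _ _ hx hy => simp [inner_add_right, add_smul, sum_add_distrib, hx, hy]
  | smul a x _ hx => simp [inner_smul_right, mul_smul, ← smul_sum, hx]

/-- A Gram matrix over a countable index set is the covariance of a centered Gaussian process. -/
theorem exists_isGaussianProcess_integral_mul_eq_inner {T H : Type*} [Countable T]
    [NormedAddCommGroup H] [InnerProductSpace ℝ H] (φ : T → H) :
    ∃ (Ω : Type) (_ : MeasurableSpace Ω) (P : Measure Ω) (G : T → Ω → ℝ),
      IsProbabilityMeasure P ∧ (∀ t, Measurable (G t)) ∧ IsGaussianProcess G P ∧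
        (∀ t, ∫ ω, G t ω ∂P = 0) ∧
        ∀ s t, ∫ ω, G s ω * G t ω ∂P = inner ℝ (φ s) (φ t) := by
  obtain ⟨enc, enc_inj⟩ := exists_injective_nat T
  set ψ : ℕ → H := Function.extend enc φ 0
  have hψ : ∀ t, ψ (enc t) = φ t := enc_inj.extend_apply φ 0
  set e := InnerProductSpace.gramSchmidtNormed ℝ ψ
  obtain ⟨Ω, mΩ, P, ξ, ξ_meas, ξ_law, ξ_indep, hP⟩ := exists_iid ℕ (gaussianReal 0 1)
  have ξ_gauss : IsGaussianProcess ξ P :=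
    ⟨fun I => iIndepFun.hasGaussianLaw (X := fun (i : I) => ξ i)
      (fun i => (ξ_law i).hasGaussianLaw) (ξ_indep.precomp Subtype.val_injective)⟩
  have ξ_memLp : ∀ k, MemLp (ξ k) 2 P := fun k => (ξ_law k).hasGaussianLaw.memLp_two
  have ξ_int : ∀ k, ∫ ω, ξ k ω ∂P = 0 := fun k => by
    rw [(ξ_law k).integral_eq, integral_id_gaussianReal]
  have ξ_mul : ∀ k l, ∫ ω, ξ k ω * ξ l ω ∂P = if k = l then 1 else 0 := by
    intro k l
    split_ifs with h
    · subst h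
      have := variance_of_integral_eq_zero (ξ_meas k).aemeasurable (ξ_int k)
      rw [(ξ_law k).variance_eq, variance_id_gaussianReal] at this
      simpa [pow_two] using this.symm
    · rw [(ξ_indep.indepFun h).integral_fun_mul_eq_mul_integral
        (ξ_memLp k).1 (ξ_memLp l).1, ξ_int, zero_mul]
  -- The coefficients vanish beyond the truncation, so its exact place does not matter.
  have e_tri : ∀ n k, n < k → inner ℝ (e k) (ψ n) = 0 := fun n k h => by
    simp [e, InnerProductSpace.gramSchmidtNormed, inner_smul_left,
      InnerProductSpace.gramSchmidt_inv_triangular ℝ ψ h]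
  set G : T → Ω → ℝ := fun t ω =>
    ∑ k ∈ Finset.range (enc t + 1), inner ℝ (e k) (φ t) * ξ k ω with hG
  have G_eq : ∀ t N, enc t < N →
      G t = fun ω => ∑ k ∈ Finset.range N, inner ℝ (e k) (φ t) * ξ k ω := by
    intro t N hN
    ext ω
    refine Finset.sum_subset (Finset.range_mono hN) fun k _ hk => ?_
    rw [← hψ, e_tri _ _ (by simpa using hk), zero_mul]
  refine ⟨Ω, mΩ, P, G, hP, fun t => by fun_prop, ?_, fun t => ?_, fun s t => ?_⟩
  · refine ξ_gauss.of_isGaussianProcess fun t => ⟨Finset.range (enc t + 1),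
      ∑ k : Finset.range (enc t + 1),
        inner ℝ (e k) (φ t) • ContinuousLinearMap.proj (R := ℝ) (φ := fun _ => ℝ) k, fun ω => ?_⟩
    simpa [hG] using (Finset.sum_attach _ _).symm
  · simp only [hG]
    rw [integral_finsetSum _ fun k _ => ((ξ_memLp k).integrable (by norm_num)).const_mul _]
    simp [integral_const_mul, ξ_int]
  · obtain ⟨N, hs, ht⟩ : ∃ N, enc s < N ∧ enc t < N :=
      ⟨max (enc s) (enc t) + 1, by grind, by grind⟩
    have hint : ∀ k l, Integrable
        (fun ω => (inner ℝ (e k) (φ s) * ξ k ω) * (inner ℝ (e l) (φ t) * ξ l ω)) P :=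
      fun k l => ((ξ_memLp k).const_mul _).integrable_mul ((ξ_memLp l).const_mul _)
    have hval : ∀ k l,
        ∫ ω, (inner ℝ (e k) (φ s) * ξ k ω) * (inner ℝ (e l) (φ t) * ξ l ω) ∂P =
          inner ℝ (e k) (φ s) * inner ℝ (e l) (φ t) * if k = l then 1 else 0 := fun k l => by
      rw [← ξ_mul, ← integral_const_mul]
      simp only [mul_mul_mul_comm _ (ξ k _)]
    rw [G_eq s N hs, G_eq t N ht]
    simp_rw [Finset.sum_mul_sum]
    rw [integral_finsetSum _ fun k _ => integrable_finsetSum _ fun l _ => hint k l]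
    have hexp := sum_inner_gramSchmidtNormed_smul ψ hs
    rw [hψ] at hexp
    conv_rhs => rw [← hexp]
    rw [sum_inner]
    refine Finset.sum_congr rfl fun k hk => ?_
    rw [integral_finsetSum _ fun l _ => hint k l]
    simp only [hval, mul_ite, mul_one, mul_zero, Finset.sum_ite_eq, if_pos hk, inner_smul_left]
    rfl

/-- Finite linear combinations of a centered Gaussian process are centered Gaussian variables. -/
lemma IsGaussianProcess.exists_map_sum_eq_gaussianReal {T Ω : Type*} {mΩ : MeasurableSpace Ω}
    {P : Measure Ω} {G : T → Ω → ℝ} (hG : IsGaussianProcess G P)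
    (hG0 : ∀ t, ∫ ω, G t ω ∂P = 0) {ι : Type*} [Fintype ι] (c : ι → ℝ) (idx : ι → T) :
    ∃ v : NNReal, P.map (fun ω => ∑ p, c p * G (idx p) ω) = gaussianReal 0 v := by
  have h : HasGaussianLaw (fun ω => ∑ p, c p * G (idx p) ω) P :=
    ((hG.comp_right idx).smul c).hasGaussianLaw_fun_sum
  refine ⟨Var[fun ω => ∑ p, c p * G (idx p) ω; P].toNNReal, h.map_eq_gaussianReal.trans ?_⟩
  congr 1
  rw [integral_finsetSum _ fun p _ => (hG.hasGaussianLaw_eval _).integrable.const_mul _]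
  simp [integral_const_mul, hG0]

end ProbabilityTheory

/-- Negation preserves Lebesgue measure on a symmetric square. -/
lemma measurePreserving_neg_restrict_Icc_prod (a : ℝ) :
    MeasurePreserving (fun p : ℝ × ℝ => -p)
      (volume.restrict (Set.Icc (-a) a ×ˢ Set.Icc (-a) a))
      (volume.restrict (Set.Icc (-a) a ×ˢ Set.Icc (-a) a)) := by
  convert (Measure.measurePreserving_neg (volume : Measure (ℝ × ℝ))).restrict_preimage
    (measurableSet_Icc.prod measurableSet_Icc : MeasurableSet (Set.Icc (-a) a ×ˢ Set.Icc (-a) a))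
    using 2
  ext ⟨x, y⟩
  simp only [Set.mem_prod, Set.mem_Icc, Set.mem_preimage, Prod.neg_mk]
  constructor <;> rintro ⟨⟨_, _⟩, _, _⟩ <;> refine ⟨⟨?_, ?_⟩, ?_, ?_⟩ <;> linarith

/-- The Fourier coefficients of an even integrable function on a square are cosine integrals. -/
lemma integral_exp_mul_eq_integral_cos_mul {f : ℝ → ℝ → ℝ}
    (hf_even : ∀ x ∈ Set.Icc (-π) π, ∀ y ∈ Set.Icc (-π) π, f (-x) (-y) = f x y)
    (hf_int : IntegrableOn (fun p : ℝ × ℝ => f p.1 p.2)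
      (Set.Icc (-π) π ×ˢ Set.Icc (-π) π)) (u v : ℝ) :
    ∫ x in (-π)..π, ∫ y in (-π)..π,
        Complex.exp (Complex.I * ((u : ℂ) * (x : ℂ) + (v : ℂ) * (y : ℂ))) * (f x y : ℂ) =
      ((∫ p in Set.Icc (-π) π ×ˢ Set.Icc (-π) π,
        f p.1 p.2 * cos (u * p.1 + v * p.2) : ℝ) : ℂ) := by
  set S := Set.Icc (-π) π ×ˢ Set.Icc (-π) π
  have hS_meas : MeasurableSet S := measurableSet_Icc.prod measurableSet_Icc
  have hle : -π ≤ π := by linarith [pi_pos]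
  have hcos : IntegrableOn (fun p : ℝ × ℝ => f p.1 p.2 * cos (u * p.1 + v * p.2)) S :=
    hf_int.mul_bdd (c := 1) (by fun_prop) (.of_forall fun p => abs_cos_le_one _)
  have hsin : IntegrableOn (fun p : ℝ × ℝ => f p.1 p.2 * sin (u * p.1 + v * p.2)) S :=
    hf_int.mul_bdd (c := 1) (by fun_prop) (.of_forall fun p => abs_sin_le_one _)
  have hsplit : ∀ p : ℝ × ℝ,
      Complex.exp (Complex.I * ((u : ℂ) * (p.1 : ℂ) + (v : ℂ) * (p.2 : ℂ))) * (f p.1 p.2 : ℂ) =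
        ((f p.1 p.2 * cos (u * p.1 + v * p.2) : ℝ) : ℂ) +
          ((f p.1 p.2 * sin (u * p.1 + v * p.2) : ℝ) : ℂ) * Complex.I := by
    intro p
    rw [mul_comm Complex.I, Complex.exp_mul_I]
    push_cast
    ring
  have hsin_zero : ∫ p in S, f p.1 p.2 * sin (u * p.1 + v * p.2) = 0 := by
    have hneg := (measurePreserving_neg_restrict_Icc_prod π).integral_comp
      (MeasurableEquiv.neg (ℝ × ℝ)).measurableEmbedding
      (fun p => f p.1 p.2 * sin (u * p.1 + v * p.2))
    have hodd : ∫ p in S, f (-p).1 (-p).2 * sin (u * (-p).1 + v * (-p).2) =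
        ∫ p in S, -(f p.1 p.2 * sin (u * p.1 + v * p.2)) := by
      refine setIntegral_congr_fun hS_meas fun p hp => ?_
      simp only [Prod.fst_neg, Prod.snd_neg, hf_even p.1 hp.1 p.2 hp.2]
      rw [show u * -p.1 + v * -p.2 = -(u * p.1 + v * p.2) by ring, sin_neg, mul_neg]
    rw [integral_neg] at hodd
    linarith [hodd.symm.trans hneg]
  have hint : IntegrableOn (fun p : ℝ × ℝ =>
      Complex.exp (Complex.I * ((u : ℂ) * (p.1 : ℂ) + (v : ℂ) * (p.2 : ℂ))) * (f p.1 p.2 : ℂ)) S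
      (volume.prod volume) := by
    simp_rw [hsplit]
    exact hcos.ofReal.add (hsin.ofReal.mul_const _)
  simp_rw [intervalIntegral.integral_of_le hle, ← integral_Icc_eq_integral_Ioc]
  rw [← setIntegral_prod _ hint, ← Measure.volume_eq_prod]
  simp_rw [hsplit]
  rw [integral_add hcos.ofReal (hsin.ofReal.mul_const _), integral_mul_const,
    integral_complex_ofReal, integral_complex_ofReal, hsin_zero,
    Complex.ofReal_zero, zero_mul, add_zero]

/-- Cosine integrals against an integrable density are inner products of characters. -/
lemma exists_inner_eq_integral_cos_mul {f : ℝ → ℝ → ℝ} {S : Set (ℝ × ℝ)} (hS : MeasurableSet S)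
    (hf_nonneg : ∀ p ∈ S, 0 ≤ f p.1 p.2)
    (hf_int : IntegrableOn (fun p : ℝ × ℝ => f p.1 p.2) S) :
    ∃ (μ : Measure (ℝ × ℝ)) (φ : ℤ × ℤ → Lp ℂ 2 μ), ∀ s t : ℤ × ℤ,
      inner ℝ (φ s) (φ t) =
        ∫ p in S, f p.1 p.2 * cos (((t.1 : ℝ) - s.1) * p.1 + ((t.2 : ℝ) - s.2) * p.2) := by
  set μ := (volume.restrict S).withDensity fun p => ENNReal.ofReal (f p.1 p.2)
  have : IsFiniteMeasure μ := isFiniteMeasure_withDensity_ofReal hf_int.2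
  set χ : ℤ × ℤ → ℝ × ℝ → ℂ := fun t p =>
    Complex.exp (((t.1 * p.1 + t.2 * p.2 : ℝ) : ℂ) * Complex.I) with hχ
  have χ_memLp : ∀ t, MemLp (χ t) 2 μ := fun t =>
    .of_bound (by fun_prop) 1 (.of_forall fun p => (Complex.norm_exp_ofReal_mul_I _).le)
  have χ_inner : ∀ s t p, inner ℝ (χ s p) (χ t p) =
      cos (((t.1 : ℝ) - s.1) * p.1 + ((t.2 : ℝ) - s.2) * p.2) := by
    intro s t p
    rw [Complex.inner, hχ, ← Complex.exp_conj, ← Complex.exp_add, map_mul, Complex.conj_ofReal,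
      Complex.conj_I, mul_neg, ← sub_eq_add_neg, ← sub_mul, ← Complex.ofReal_sub,
      Complex.exp_ofReal_mul_I_re]
    congr 1
    ring
  refine ⟨μ, fun t => (χ_memLp t).toLp, fun s t => ?_⟩
  have hae : (fun p => inner ℝ ((χ_memLp s).toLp (χ s) p) ((χ_memLp t).toLp (χ t) p)) =ᵐ[μ]
      fun p => cos (((t.1 : ℝ) - s.1) * p.1 + ((t.2 : ℝ) - s.2) * p.2) := by
    filter_upwards [(χ_memLp s).coeFn_toLp, (χ_memLp t).coeFn_toLp] with p hs ht
    rw [hs, ht, χ_inner]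
  rw [L2.inner_def, integral_congr_ae hae, integral_withDensity_eq_integral_toReal_smul₀
    hf_int.aemeasurable.ennreal_ofReal (.of_forall fun _ => ENNReal.ofReal_lt_top)]
  refine setIntegral_congr_fun hS fun p hp => ?_
  simp [ENNReal.toReal_ofReal (hf_nonneg p hp)]

/-- For a nonnegative, even, integrable `f` on `[-π,π]²` with Fourier
coefficients `C(u,v) = ∫∫ e^{ι(ux+vy)} f(x,y) dx dy`, there exists a centered stationary
Gaussian process `(G_{i,j} : i,j ∈ ℤ)` on some probability space with covariance
`E[G_{i,j} G_{i+u,j+v}] = C(u,v)`. -/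
theorem stmt_7 (f : ℝ → ℝ → ℝ)
    (hf_nonneg : ∀ x ∈ Set.Icc (-π) π, ∀ y ∈ Set.Icc (-π) π, 0 ≤ f x y)
    (hf_even : ∀ x ∈ Set.Icc (-π) π, ∀ y ∈ Set.Icc (-π) π, f (-x) (-y) = f x y)
    (hf_int : IntegrableOn (fun p : ℝ × ℝ => f p.1 p.2)
      (Set.Icc (-π) π ×ˢ Set.Icc (-π) π)) :
    ∃ (Ω : Type) (mΩ : MeasurableSpace Ω) (P : Measure Ω),
      IsProbabilityMeasure P ∧
      ∃ G : ℤ → ℤ → Ω → ℝ,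
        (∀ i j : ℤ, Measurable (G i j)) ∧
        (∀ (m : ℕ) (c : Fin m → ℝ) (idx : Fin m → ℤ × ℤ), ∃ v : NNReal,
          Measure.map (fun ω => ∑ p, c p * G (idx p).1 (idx p).2 ω) P =
            ProbabilityTheory.gaussianReal 0 v) ∧
        (∀ i j u v : ℤ,
          ((∫ ω, G i j ω * G (i + u) (j + v) ω ∂P : ℝ) : ℂ) =
            ∫ x in (-π)..π, ∫ y in (-π)..π,
              Complex.exp (Complex.I * ((u : ℂ) * (x : ℂ) + (v : ℂ) * (y : ℂ)))
                * (f x y : ℂ)) := by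
  obtain ⟨μ, φ, hφ⟩ := exists_inner_eq_integral_cos_mul
    (measurableSet_Icc.prod measurableSet_Icc) (fun p hp => hf_nonneg p.1 hp.1 p.2 hp.2) hf_int
  obtain ⟨Ω, mΩ, P, G, hP, G_meas, G_gauss, G_int, G_mul⟩ :=
    ProbabilityTheory.exists_isGaussianProcess_integral_mul_eq_inner φ
  refine ⟨Ω, mΩ, P, hP, fun i j => G (i, j), fun i j => G_meas (i, j),
    fun m c idx => G_gauss.exists_map_sum_eq_gaussianReal G_int c idx, fun i j u v => ?_⟩
  rw [G_mul, hφ]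
  have := integral_exp_mul_eq_integral_cos_mul hf_even hf_int u v
  push_cast at this ⊢
  simpa using this.symm
end
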